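/- The operator 𝓛 has exactly one negative eigenvalue, and it is simple: there exists a unique ξ_d < 0 for which the problem −φ'' − 5(1 + R²/3)^{−2} φ = ξ_d φ on (0,∞), φ(0) = 0, φ ∈ L²(0,∞), admits a nonzero solution; the space of such solutions is one-dimensional, spanned by a smooth function φ_d which is strictly positive on (0,∞) and decays exponentially, i.e. |φ_d(R)| ≤ C e^{−√|ξ_d| R/2} for all R ≥ 0. For every other ξ < 0 with ξ ≠ ξ_d, the only solution of −φ'' − 5(1+R²/3)^{−2} φ = ξ φ with φ(0) = 0 and φ ∈ L²(0,∞) is φ ≡ 0. -/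

import Mathlib

/-!
Write `κ = -ξ` and let `u` be the solution of `u'' = (κ - q) u` with `u(0) = 0`, `u'(0) = 1`, where
`q` is the potential. For `κ ≥ sup q` it is positive on `(0, ∞)`, whereas for `κ = 0` it is explicit
and changes sign. The set of `κ` for which `u ≥ 0` is closed, and it is open wherever `u` is not
square integrable, so by connectedness some `κ > 0` carries a positive square integrable solution.
It decays exponentially because `(u²)'' ≥ κ u²` near infinity.

Conversely, let `u` be square integrable with `κ > 0`. The zero-energy solution has a single zero,
so Sturm comparison and Picone's identity show that `u` has no zero on `(0, ∞)`. The Wronskian of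
two positive square integrable solutions vanishes at `0` and at infinity and is strictly monotone
unless the energies agree.
-/

noncomputable section

namespace NegativeEigenvalue

/-- `φ` is a Dirichlet eigenfunction of `𝓛 f = -f'' - 5(1+R²/3)^{-2} f` on `(0,∞)` with
eigenvalue `ξ`: it vanishes at `0`, is continuous on `[0,∞)`, twice differentiable on `(0,∞)`,
solves the eigenvalue equation there, and is square integrable on `(0,∞)`. -/
def IsDirichletEigenfunction (ξ : ℝ) (φ : ℝ → ℝ) : Prop :=
  φ 0 = 0 ∧ ContinuousOn φ (Set.Ici 0) ∧
  (∀ R ∈ Set.Ioi (0 : ℝ), HasDerivAt φ (deriv φ R) R) ∧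
  (∀ R ∈ Set.Ioi (0 : ℝ), HasDerivAt (deriv φ) (deriv (deriv φ) R) R) ∧
  (∀ R ∈ Set.Ioi (0 : ℝ),
    - deriv (deriv φ) R - (5 / (1 + R ^ 2 / 3) ^ 2) * φ R = ξ * φ R) ∧
  MeasureTheory.IntegrableOn (fun R => (φ R) ^ 2) (Set.Ioi 0)

open Filter Topology Set MeasureTheory Asymptotics
open scoped BoundedContinuousFunction

section RealFunctions

variable {f f' f'' : ℝ → ℝ} {a b : ℝ} {D : Set ℝ}

lemma monotoneOn_of_hasDerivAt_nonneg (hD : Convex ℝ D) (hf : ∀ t ∈ D, HasDerivAt f (f' t) t)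
    (hf' : ∀ t ∈ interior D, 0 ≤ f' t) : MonotoneOn f D :=
  monotoneOn_of_hasDerivWithinAt_nonneg hD
    (fun t ht ↦ (hf t ht).continuousAt.continuousWithinAt)
    (fun t ht ↦ (hf t (interior_subset ht)).hasDerivWithinAt) hf'

lemma antitoneOn_of_hasDerivAt_nonpos (hD : Convex ℝ D) (hf : ∀ t ∈ D, HasDerivAt f (f' t) t)
    (hf' : ∀ t ∈ interior D, f' t ≤ 0) : AntitoneOn f D :=
  antitoneOn_of_hasDerivWithinAt_nonpos hD
    (fun t ht ↦ (hf t ht).continuousAt.continuousWithinAt)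
    (fun t ht ↦ (hf t (interior_subset ht)).hasDerivWithinAt) hf'

lemma strictMonoOn_of_hasDerivAt_pos (hD : Convex ℝ D) (hf : ∀ t ∈ D, HasDerivAt f (f' t) t)
    (hf' : ∀ t ∈ interior D, 0 < f' t) : StrictMonoOn f D :=
  strictMonoOn_of_hasDerivWithinAt_pos hD
    (fun t ht ↦ (hf t ht).continuousAt.continuousWithinAt)
    (fun t ht ↦ (hf t (interior_subset ht)).hasDerivWithinAt) hf'

lemma eventually_nhdsGT_pos_of_deriv_pos (h : 0 < deriv f a) (hfa : f a = 0) :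
    ∀ᶠ t in 𝓝[>] a, 0 < f t := by
  filter_upwards [(eventually_nhdsWithin_sign_eq_of_deriv_pos h hfa).filter_mono
    nhdsWithin_le_nhds, self_mem_nhdsWithin] with t hsign (ht : a < t)
  rwa [sign_pos (sub_pos.2 ht), sign_eq_one_iff] at hsign

lemma deriv_nonpos_of_pos_left (hab : a < b) (hpos : ∀ t ∈ Ioo a b, 0 < f t) (hfb : f b = 0) :
    deriv f b ≤ 0 := by
  by_contra! h
  have hneg : ∀ᶠ t in 𝓝[<] b, f t < 0 := by
    filter_upwards [(eventually_nhdsWithin_sign_eq_of_deriv_pos h hfb).filter_mono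
      nhdsWithin_le_nhds, self_mem_nhdsWithin] with t hsign (ht : t < b)
    rwa [sign_neg (sub_neg.2 ht), sign_eq_neg_one_iff] at hsign
  obtain ⟨t, htneg, ht⟩ := (hneg.and (Ioo_mem_nhdsLT hab)).exists
  exact (hpos t ht).not_gt htneg

lemma exists_first_zero (hf : Continuous f) (hpos : ∀ᶠ t in 𝓝[>] a, 0 < f t) (hab : a < b)
    (hb : f b ≤ 0) : ∃ c ∈ Ioc a b, f c = 0 ∧ ∀ t ∈ Ioo a c, 0 < f t := by
  obtain ⟨d, had, hd⟩ := mem_nhdsGT_iff_exists_Ioc_subset.1 hpos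
  have hdb : d < b := lt_of_not_ge fun h ↦ (hd ⟨hab, h⟩ : 0 < f b).not_ge hb
  obtain ⟨c, ⟨⟨hdc, hcb⟩, hfc⟩, hmin⟩ := (isCompact_Icc.inter_right
    (isClosed_le hf continuous_const)).exists_isLeast (s := Icc d b ∩ {t | f t ≤ 0})
    ⟨b, ⟨hdb.le, le_rfl⟩, hb⟩
  have hac : a < c := had.trans_le hdc
  have hposc (t : ℝ) (ht : t ∈ Ioo a c) : 0 < f t := by
    by_contra! hft
    rcases le_total t d with htd | hdt
    · exact (hd ⟨ht.1, htd⟩ : 0 < f t).not_ge hft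
    · exact (hmin ⟨⟨hdt, ht.2.le.trans hcb⟩, hft⟩).not_gt ht.2
  have hclosed : closure (Ioo a c) ⊆ {t | 0 ≤ f t} :=
    closure_minimal (fun t ht ↦ (hposc t ht).le) (isClosed_le continuous_const hf)
  rw [closure_Ioo hac.ne] at hclosed
  exact ⟨c, ⟨hac, hcb⟩, le_antisymm hfc (hclosed ⟨hac.le, le_rfl⟩), hposc⟩

lemma exists_forall_ge_le_of_eventually_le (hf : Continuous f) {B : ℝ}
    (hB : ∀ᶠ t in atTop, f t ≤ B) (a : ℝ) : ∃ C, ∀ t ≥ a, f t ≤ C := by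
  obtain ⟨b, hb⟩ := eventually_atTop.1 hB
  obtain ⟨C, hC⟩ := (isCompact_Icc (a := a) (b := b)).bddAbove_image hf.continuousOn
  refine ⟨max B C, fun t ht ↦ ?_⟩
  rcases le_total b t with hbt | htb
  · exact (hb t hbt).trans (le_max_left _ _)
  · exact (hC (mem_image_of_mem f ⟨ht, htb⟩)).trans (le_max_right _ _)

lemma nonpos_of_integrableOn_Ioi_of_le {c : ℝ} (hf : IntegrableOn f (Ioi a))
    (hc : ∀ t ∈ Ioi b, c ≤ f t) : c ≤ 0 := by
  by_contra! hpos
  have hconst : IntegrableOn (fun _ ↦ c) (Ioi (max a b)) :=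
    (hf.mono_set (Ioi_subset_Ioi (le_max_left a b))).mono' aestronglyMeasurable_const <|
      ae_restrict_of_forall_mem measurableSet_Ioi fun t ht ↦ by
        simpa [abs_of_pos hpos] using hc t ((le_max_right a b).trans_lt ht)
  simp [integrableOn_const_iff, hpos.ne'] at hconst

lemma hasDerivAt_sq {f₀ t : ℝ} (hf : HasDerivAt f f₀ t) :
    HasDerivAt (fun t ↦ f t ^ 2) (2 * (f t * f₀)) t := by
  simpa [mul_assoc] using! hf.pow 2

lemma hasDerivAt_exp_const_mul (c t : ℝ) :
    HasDerivAt (fun t ↦ Real.exp (c * t)) (c * Real.exp (c * t)) t := by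
  simpa [mul_comm] using ((hasDerivAt_id t).const_mul c).exp

lemma monotoneOn_deriv_add_mul_exp {ω : ℝ} (hf : ∀ t ∈ Ici a, HasDerivAt f (f' t) t)
    (hf' : ∀ t ∈ Ici a, HasDerivAt f' (f'' t) t) (hconv : ∀ t ∈ Ici a, ω ^ 2 * f t ≤ f'' t) :
    MonotoneOn (fun t ↦ (f' t + ω * f t) * Real.exp (-ω * t)) (Ici a) :=
  monotoneOn_of_hasDerivAt_nonneg (convex_Ici a) (fun t ht ↦
    ((hf' t ht).add ((hf t ht).const_mul ω)).mul (hasDerivAt_exp_const_mul (-ω) t)) fun t ht ↦ by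
      have : 0 ≤ (f'' t - ω ^ 2 * f t) * Real.exp (-ω * t) :=
        mul_nonneg (sub_nonneg.2 (hconv t (interior_subset ht))) (Real.exp_pos _).le
      simp only [Pi.add_apply]
      linarith

/- Otherwise `f' + ω f` would grow exponentially, forcing `f` to be unbounded. -/
lemma deriv_add_mul_nonpos {ω M : ℝ} (hω : 0 < ω) (hf : ∀ t ∈ Ici a, HasDerivAt f (f' t) t)
    (hf' : ∀ t ∈ Ici a, HasDerivAt f' (f'' t) t) (hM : ∀ t ∈ Ici a, f t ≤ M)
    (hconv : ∀ t ∈ Ici a, ω ^ 2 * f t ≤ f'' t) {t₀ : ℝ} (ht₀ : t₀ ∈ Ici a) :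
    f' t₀ + ω * f t₀ ≤ 0 := by
  by_contra! hpos
  set δ := (f' t₀ + ω * f t₀) * Real.exp (-ω * t₀)
  have hgrow : Tendsto (fun t ↦ δ * Real.exp (ω * t)) atTop atTop :=
    (Real.tendsto_exp_atTop.comp (tendsto_id.const_mul_atTop hω)).const_mul_atTop
      (mul_pos hpos (Real.exp_pos _))
  have hle (t : ℝ) (ht : t₀ ≤ t) : δ * Real.exp (ω * t) ≤ f' t + ω * f t := by
    have := mul_le_mul_of_nonneg_right (monotoneOn_deriv_add_mul_exp hf hf' hconv ht₀
      (le_trans ht₀ ht) ht) (Real.exp_pos (ω * t)).le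
    rwa [mul_assoc (f' t + ω * f t), ← Real.exp_add, neg_mul, neg_add_cancel, Real.exp_zero,
      mul_one] at this
  obtain ⟨b, hb⟩ := eventually_atTop.1 ((hgrow.eventually_ge_atTop (1 + ω * M)).and
    (eventually_ge_atTop t₀))
  have hba : Ici b ⊆ Ici a := Ici_subset_Ici.2 (le_trans ht₀ (hb b le_rfl).2)
  have hslope (t : ℝ) (ht : t ∈ Ici b) : 1 ≤ f' t := by
    linarith [(hb t ht).1, hle t (hb t ht).2, mul_le_mul_of_nonneg_left (hM t (hba ht)) hω.le]
  have hmono : MonotoneOn (fun t ↦ f t - t) (Ici b) :=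
    monotoneOn_of_hasDerivAt_nonneg (convex_Ici b)
      (fun t ht ↦ (hf t (hba ht)).sub (hasDerivAt_id t))
      fun t ht ↦ sub_nonneg.2 (hslope t (interior_subset ht))
  have hbt : b ≤ b + (M - f b) + 1 := by linarith [hM b (hba self_mem_Ici)]
  linarith [hmono self_mem_Ici hbt hbt, hM _ (hba hbt)]

theorem antitoneOn_mul_exp {ω M : ℝ} (hω : 0 < ω) (hf : ∀ t ∈ Ici a, HasDerivAt f (f' t) t)
    (hf' : ∀ t ∈ Ici a, HasDerivAt f' (f'' t) t) (hM : ∀ t ∈ Ici a, f t ≤ M)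
    (hconv : ∀ t ∈ Ici a, ω ^ 2 * f t ≤ f'' t) :
    AntitoneOn (fun t ↦ f t * Real.exp (ω * t)) (Ici a) :=
  antitoneOn_of_hasDerivAt_nonpos (convex_Ici a)
    (fun t ht ↦ (hf t ht).mul (hasDerivAt_exp_const_mul ω t)) fun t ht ↦ by
      have := mul_nonpos_of_nonpos_of_nonneg
        (deriv_add_mul_nonpos hω hf hf' hM hconv (interior_subset ht)) (Real.exp_pos (ω * t)).le
      linarith

end RealFunctions

section LinearODE

variable {E : Type*} [NormedAddCommGroup E] [NormedSpace ℝ E] {A : ℝ → E →L[ℝ] E}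

/-- The weight of the Bielecki norm on curves, for which the Volterra operator of the linear
equation `y' = A y` is a contraction on all of `ℝ` even though `A` may be unbounded. -/
def bieleckiWeight (A : ℝ → E →L[ℝ] E) (t₀ t : ℝ) : ℝ :=
  Real.cosh (2 * ∫ s in t₀..t, ‖A s‖)

lemma one_le_bieleckiWeight (A : ℝ → E →L[ℝ] E) (t₀ t : ℝ) : 1 ≤ bieleckiWeight A t₀ t :=
  Real.one_le_cosh _

lemma bieleckiWeight_pos (A : ℝ → E →L[ℝ] E) (t₀ t : ℝ) : 0 < bieleckiWeight A t₀ t :=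
  Real.cosh_pos _

lemma hasDerivAt_integral_norm (hA : Continuous A) (t₀ t : ℝ) :
    HasDerivAt (fun t ↦ ∫ s in t₀..t, ‖A s‖) ‖A t‖ t :=
  (hA.norm.integral_hasStrictDerivAt t₀ t).hasDerivAt

lemma continuous_bieleckiWeight (hA : Continuous A) (t₀ : ℝ) :
    Continuous (bieleckiWeight A t₀) :=
  Real.continuous_cosh.comp <| continuous_const.mul <|
    continuous_iff_continuousAt.2 fun t ↦ (hasDerivAt_integral_norm hA t₀ t).continuousAt

lemma abs_integral_norm_mul_bieleckiWeight_le (hA : Continuous A) (t₀ t : ℝ) :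
    |∫ s in t₀..t, ‖A s‖ * bieleckiWeight A t₀ s| ≤ bieleckiWeight A t₀ t / 2 := by
  have hderiv (s : ℝ) : HasDerivAt (fun s ↦ Real.sinh (2 * ∫ r in t₀..s, ‖A r‖) / 2)
      (‖A s‖ * bieleckiWeight A t₀ s) s := by
    convert! (((hasDerivAt_integral_norm hA t₀ s).const_mul 2).sinh).div_const 2 using 1
    rw [bieleckiWeight]
    ring
  have hint : ∫ s in t₀..t, ‖A s‖ * bieleckiWeight A t₀ s =
      Real.sinh (2 * ∫ s in t₀..t, ‖A s‖) / 2 := by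
    rw [intervalIntegral.integral_eq_sub_of_hasDerivAt (fun s _ ↦ hderiv s)
      ((hA.norm.mul (continuous_bieleckiWeight hA t₀)).intervalIntegrable _ _)]
    simp
  rw [hint, abs_div, abs_two, Real.abs_sinh, bieleckiWeight, ← Real.cosh_abs]
  gcongr
  exact (Real.sinh_lt_cosh _).le

lemma continuous_clm_apply_bieleckiWeight_smul (hA : Continuous A) (t₀ : ℝ) (w : ℝ →ᵇ E) :
    Continuous fun s ↦ A s (bieleckiWeight A t₀ s • w s) :=
  hA.clm_apply ((continuous_bieleckiWeight hA t₀).smul w.continuous)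

lemma hasDerivAt_integral_clm_apply [CompleteSpace E] (hA : Continuous A) (t₀ : ℝ) (w : ℝ →ᵇ E)
    (t : ℝ) : HasDerivAt (fun t ↦ ∫ s in t₀..t, A s (bieleckiWeight A t₀ s • w s))
      (A t (bieleckiWeight A t₀ t • w t)) t :=
  ((continuous_clm_apply_bieleckiWeight_smul hA t₀ w).integral_hasStrictDerivAt t₀ t).hasDerivAt

lemma norm_integral_clm_apply_le (hA : Continuous A) (t₀ : ℝ) (w : ℝ →ᵇ E) (t : ℝ) :
    ‖∫ s in t₀..t, A s (bieleckiWeight A t₀ s • w s)‖ ≤ bieleckiWeight A t₀ t * (‖w‖ / 2) := by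
  have hpointwise (s : ℝ) : ‖A s (bieleckiWeight A t₀ s • w s)‖ ≤
      ‖w‖ * (‖A s‖ * bieleckiWeight A t₀ s) := calc
    _ ≤ ‖A s‖ * ‖bieleckiWeight A t₀ s • w s‖ := (A s).le_opNorm _
    _ = ‖A s‖ * (bieleckiWeight A t₀ s * ‖w s‖) := by
      rw [norm_smul, Real.norm_of_nonneg (bieleckiWeight_pos A t₀ s).le]
    _ ≤ ‖A s‖ * (bieleckiWeight A t₀ s * ‖w‖) := by
      have := (bieleckiWeight_pos A t₀ s).le
      gcongr
      exact w.norm_coe_le_norm s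
    _ = ‖w‖ * (‖A s‖ * bieleckiWeight A t₀ s) := by ring
  have hint : IntervalIntegrable (fun s ↦ ‖w‖ * (‖A s‖ * bieleckiWeight A t₀ s)) volume t₀ t :=
    (continuous_const.mul (hA.norm.mul (continuous_bieleckiWeight hA t₀))).intervalIntegrable _ _
  calc
    _ ≤ |∫ s in t₀..t, ‖w‖ * (‖A s‖ * bieleckiWeight A t₀ s)| :=
      intervalIntegral.norm_integral_le_abs_of_norm_le (.of_forall hpointwise) hint
    _ = ‖w‖ * |∫ s in t₀..t, ‖A s‖ * bieleckiWeight A t₀ s| := by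
      rw [intervalIntegral.integral_const_mul, abs_mul, abs_norm]
    _ ≤ ‖w‖ * (bieleckiWeight A t₀ t / 2) := by
      gcongr
      exact abs_integral_norm_mul_bieleckiWeight_le hA t₀ t
    _ = bieleckiWeight A t₀ t * (‖w‖ / 2) := by ring

variable [CompleteSpace E]

/-- The Volterra operator `y ↦ ∫ A y` of the linear equation `y' = A y`, conjugated by the
Bielecki weight so that it acts on bounded continuous curves. -/
def volterra (hA : Continuous A) (t₀ : ℝ) (w : ℝ →ᵇ E) : ℝ →ᵇ E :=
  .ofNormedAddCommGroup
    (fun t ↦ (bieleckiWeight A t₀ t)⁻¹ • ∫ s in t₀..t, A s (bieleckiWeight A t₀ s • w s))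
    (((continuous_bieleckiWeight hA t₀).inv₀ fun t ↦ (bieleckiWeight_pos A t₀ t).ne').smul
      (continuous_iff_continuousAt.2 fun t ↦
        (hasDerivAt_integral_clm_apply hA t₀ w t).continuousAt))
    (‖w‖ / 2) fun t ↦ by
      have hpos := bieleckiWeight_pos A t₀ t
      rw [norm_smul, norm_inv, Real.norm_of_nonneg hpos.le, inv_mul_le_iff₀ hpos]
      exact norm_integral_clm_apply_le hA t₀ w t

lemma volterra_apply (hA : Continuous A) (t₀ : ℝ) (w : ℝ →ᵇ E) (t : ℝ) :
    volterra hA t₀ w t =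
      (bieleckiWeight A t₀ t)⁻¹ • ∫ s in t₀..t, A s (bieleckiWeight A t₀ s • w s) := rfl

lemma norm_volterra_le (hA : Continuous A) (t₀ : ℝ) (w : ℝ →ᵇ E) :
    ‖volterra hA t₀ w‖ ≤ ‖w‖ / 2 :=
  BoundedContinuousFunction.norm_ofNormedAddCommGroup_le _ (by positivity) _

lemma volterra_sub (hA : Continuous A) (t₀ : ℝ) (w₁ w₂ : ℝ →ᵇ E) :
    volterra hA t₀ (w₁ - w₂) = volterra hA t₀ w₁ - volterra hA t₀ w₂ := by
  ext t
  have hint (w : ℝ →ᵇ E) :=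
    (continuous_clm_apply_bieleckiWeight_smul hA t₀ w).intervalIntegrable (μ := volume) t₀ t
  simp only [volterra_apply, BoundedContinuousFunction.sub_apply, smul_sub, map_sub,
    intervalIntegral.integral_sub (hint w₁) (hint w₂)]

lemma contractingWith_add_volterra (hA : Continuous A) (t₀ : ℝ) (g : ℝ →ᵇ E) :
    ContractingWith 2⁻¹ fun w ↦ g + volterra hA t₀ w := by
  refine ⟨by norm_num, .of_dist_le_mul fun w₁ w₂ ↦ ?_⟩
  rw [dist_add_left, dist_eq_norm, dist_eq_norm, ← volterra_sub]
  exact (norm_volterra_le hA t₀ _).trans_eq (by push_cast; ring)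

theorem exists_isIntegralCurve_clm_apply (hA : Continuous A) (t₀ : ℝ) (x₀ : E) :
    ∃ y : ℝ → E, y t₀ = x₀ ∧ IsIntegralCurve y fun t ↦ A t := by
  let g : ℝ →ᵇ E := .ofNormedAddCommGroup (fun t ↦ (bieleckiWeight A t₀ t)⁻¹ • x₀)
    (((continuous_bieleckiWeight hA t₀).inv₀ fun t ↦ (bieleckiWeight_pos A t₀ t).ne').smul
      continuous_const) ‖x₀‖ fun t ↦ by
    rw [norm_smul, norm_inv, Real.norm_of_nonneg (bieleckiWeight_pos A t₀ t).le]
    exact mul_le_of_le_one_left (norm_nonneg _) (inv_le_one_of_one_le₀ (one_le_bieleckiWeight ..))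
  obtain ⟨w, hw⟩ : ∃ w, g + volterra hA t₀ w = w :=
    ⟨_, (contractingWith_add_volterra hA t₀ g).fixedPoint_isFixedPt⟩
  have hy (t : ℝ) : bieleckiWeight A t₀ t • w t =
      x₀ + ∫ s in t₀..t, A s (bieleckiWeight A t₀ s • w s) := by
    have hwt : w t = (bieleckiWeight A t₀ t)⁻¹ •
        (x₀ + ∫ s in t₀..t, A s (bieleckiWeight A t₀ s • w s)) := by
      rw [smul_add, ← volterra_apply hA]
      exact (DFunLike.congr_fun hw t).symm
    rw [eq_inv_smul_iff₀ (bieleckiWeight_pos A t₀ t).ne'] at hwt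
    exact hwt
  refine ⟨fun t ↦ bieleckiWeight A t₀ t • w t, (hy t₀).trans (by simp), fun t ↦ ?_⟩
  exact ((hasDerivAt_integral_clm_apply hA t₀ w t).const_add x₀).congr_of_eventuallyEq
    (.of_forall hy)

end LinearODE

section Solutions

variable {q : ℝ → ℝ} {κ μ : ℝ} {s : Set ℝ} {u w : ℝ → ℝ}

/-- `u` solves `u'' = (κ - q) u` on `s`, that is, `-u'' - q u = ξ u` with `ξ = -κ`. -/
def IsSolutionOn (q : ℝ → ℝ) (κ : ℝ) (s : Set ℝ) (u : ℝ → ℝ) : Prop :=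
  ∀ t ∈ s, HasDerivAt u (deriv u t) t ∧ HasDerivAt (deriv u) ((κ - q t) * u t) t

namespace IsSolutionOn

lemma mono {s' : Set ℝ} (hu : IsSolutionOn q κ s' u) (h : s ⊆ s') : IsSolutionOn q κ s u :=
  fun t ht ↦ hu t (h ht)

lemma of_hasDerivAt {v : ℝ → ℝ} (hu : ∀ t, HasDerivAt u (v t) t)
    (hv : ∀ t, HasDerivAt v ((κ - q t) * u t) t) : IsSolutionOn q κ univ u := by
  intro t _
  rw [funext fun t ↦ (hu t).deriv]
  exact ⟨hu t, hv t⟩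

lemma sub (hu : IsSolutionOn q κ univ u) (hw : IsSolutionOn q κ univ w) :
    IsSolutionOn q κ univ (u - w) :=
  of_hasDerivAt (v := deriv u - deriv w) (fun t ↦ (hu t trivial).1.sub (hw t trivial).1)
    fun t ↦ by simpa only [Pi.sub_apply, mul_sub] using (hu t trivial).2.sub (hw t trivial).2

lemma differentiable (hu : IsSolutionOn q κ univ u) : Differentiable ℝ u :=
  fun t ↦ (hu t trivial).1.differentiableAt

lemma differentiable_deriv (hu : IsSolutionOn q κ univ u) : Differentiable ℝ (deriv u) :=
  fun t ↦ (hu t trivial).2.differentiableAt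

lemma contDiff (hu : IsSolutionOn q κ univ u) (hq : ContDiff ℝ (⊤ : ℕ∞) q) :
    ContDiff ℝ (⊤ : ℕ∞) u := by
  have hderiv₂ : deriv (deriv u) = fun t ↦ (κ - q t) * u t :=
    funext fun t ↦ (hu t trivial).2.deriv
  suffices ∀ n : ℕ, ContDiff ℝ n u ∧ ContDiff ℝ n (deriv u) from
    contDiff_infty.2 fun n ↦ (this n).1
  intro n
  induction n with
  | zero =>
    exact ⟨contDiff_zero.2 hu.differentiable.continuous,
      contDiff_zero.2 hu.differentiable_deriv.continuous⟩
  | succ n ih =>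
    have hqn : ContDiff ℝ n q := hq.of_le (mod_cast le_top)
    push_cast
    rw [contDiff_succ_iff_deriv, contDiff_succ_iff_deriv, hderiv₂]
    exact ⟨⟨hu.differentiable, by simp, ih.2⟩,
      ⟨hu.differentiable_deriv, by simp, (contDiff_const.sub hqn).mul ih.1⟩⟩

end IsSolutionOn

/- Solving the equation in `C(K, ℝ) × C(K, ℝ)` makes the solutions continuous in the energy, so
that no perturbation estimate is needed. -/
theorem exists_continuous_solution_family {K : Type*} [TopologicalSpace K] [CompactSpace K]
    (hq : Continuous q) (e : C(K, ℝ)) (t₀ a b : ℝ) :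
    ∃ U : K → ℝ → ℝ, Continuous (Function.uncurry U) ∧
      Continuous (Function.uncurry fun k ↦ deriv (U k)) ∧
      ∀ k, IsSolutionOn q (e k) univ (U k) ∧ U k t₀ = a ∧ deriv (U k) t₀ = b := by
  let A (t : ℝ) : C(K, ℝ) × C(K, ℝ) →L[ℝ] C(K, ℝ) × C(K, ℝ) :=
    .inl ℝ _ _ ∘L .snd ℝ _ _ +
      .inr ℝ _ _ ∘L ContinuousLinearMap.mul ℝ C(K, ℝ) (e - q t • 1) ∘L .fst ℝ _ _
  have hA : Continuous A := by
    have hmul : Continuous fun t ↦ ContinuousLinearMap.mul ℝ C(K, ℝ) (e - q t • 1) :=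
      (ContinuousLinearMap.mul ℝ C(K, ℝ)).continuous.comp (by fun_prop)
    exact continuous_const.add (continuous_const.clm_comp (hmul.clm_comp continuous_const))
  obtain ⟨y, hy₀, hy⟩ := exists_isIntegralCurve_clm_apply hA t₀ (.const K a, .const K b)
  have hfst (k : K) (t : ℝ) : HasDerivAt (fun t ↦ (y t).1 k) ((y t).2 k) t := by
    simpa [A, Function.comp_def] using
      (ContinuousMap.evalCLM ℝ k ∘L .fst ℝ C(K, ℝ) C(K, ℝ)).hasFDerivAt.comp_hasDerivAt t (hy t)
  have hsnd (k : K) (t : ℝ) : HasDerivAt (fun t ↦ (y t).2 k) ((e k - q t) * (y t).1 k) t := by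
    simpa [A, Function.comp_def, sub_mul] using
      (ContinuousMap.evalCLM ℝ k ∘L .snd ℝ C(K, ℝ) C(K, ℝ)).hasFDerivAt.comp_hasDerivAt t (hy t)
  have hderiv (k : K) : deriv (fun t ↦ (y t).1 k) = fun t ↦ (y t).2 k :=
    funext fun t ↦ (hfst k t).deriv
  have hyc := hy.continuous
  refine ⟨fun k t ↦ (y t).1 k, by fun_prop, by simp_rw [hderiv]; fun_prop, fun k ↦ ⟨?_, ?_, ?_⟩⟩
  · exact .of_hasDerivAt (hfst k) (hsnd k)
  · simp [hy₀]
  · simp [hderiv, hy₀]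

/-- The solution of `u'' = (κ - q) u` satisfying the Dirichlet condition at `0`, normalised by
`u' 0 = 1`. -/
structure IsRegularSolution (q : ℝ → ℝ) (κ : ℝ) (u : ℝ → ℝ) : Prop where
  isSolutionOn : IsSolutionOn q κ univ u
  apply_zero : u 0 = 0
  deriv_zero : deriv u 0 = 1

lemma exists_isRegularSolution (hq : Continuous q) (κ : ℝ) : ∃ u, IsRegularSolution q κ u := by
  obtain ⟨U, -, -, hU⟩ := exists_continuous_solution_family hq (.const Unit κ) 0 0 1
  exact ⟨U (), (hU ()).1, (hU ()).2.1, (hU ()).2.2⟩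

/-- The Wronskian `u' w - u w'`. -/
def wronskian (u w : ℝ → ℝ) (t : ℝ) : ℝ := deriv u t * w t - u t * deriv w t

lemma hasDerivAt_wronskian {t : ℝ} (hu : IsSolutionOn q κ s u) (hw : IsSolutionOn q μ s w)
    (ht : t ∈ s) : HasDerivAt (wronskian u w) ((κ - μ) * (u t * w t)) t := by
  obtain ⟨hu₁, hu₂⟩ := hu t ht
  obtain ⟨hw₁, hw₂⟩ := hw t ht
  convert! (hu₂.mul hw₁).sub (hu₁.mul hw₂) using 1
  ring

lemma wronskian_eq_of_mem (hs : IsOpen s) (hs' : IsPreconnected s) (hu : IsSolutionOn q κ s u)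
    (hw : IsSolutionOn q κ s w) {a b : ℝ} (ha : a ∈ s) (hb : b ∈ s) :
    wronskian u w a = wronskian u w b := by
  have hderiv (t : ℝ) (ht : t ∈ s) : HasDerivAt (wronskian u w) 0 t := by
    simpa using hasDerivAt_wronskian hu hw ht
  exact hs.is_const_of_deriv_eq_zero hs'
    (fun t ht ↦ (hderiv t ht).differentiableAt.differentiableWithinAt)
    (fun t ht ↦ (hderiv t ht).deriv) ha hb

lemma mul_wronskian_eq (φ u w : ℝ → ℝ) (t : ℝ) :
    φ t * wronskian u w t = u t * wronskian φ w t - w t * wronskian φ u t := by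
  simp only [wronskian]
  ring

theorem IsSolutionOn.eq_zero (hq : Continuous q) (hu : IsSolutionOn q κ univ u) {t₀ : ℝ}
    (h₀ : u t₀ = 0) (h₁ : deriv u t₀ = 0) (t : ℝ) : u t = 0 := by
  obtain ⟨F, -, -, hF⟩ := exists_continuous_solution_family hq (.const Unit κ) t₀ 0 1
  obtain ⟨G, -, -, hG⟩ := exists_continuous_solution_family hq (.const Unit κ) t₀ 1 0
  obtain ⟨hf, hf₀, hf₁⟩ := hF ()
  obtain ⟨hg, hg₀, hg₁⟩ := hG ()
  have hconst {v w : ℝ → ℝ} (hv : IsSolutionOn q κ univ v) (hw : IsSolutionOn q κ univ w) :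
      wronskian v w t = wronskian v w t₀ :=
    wronskian_eq_of_mem isOpen_univ isPreconnected_univ hv hw trivial trivial
  have h := mul_wronskian_eq u (F ()) (G ()) t
  rw [hconst hf hg, hconst hu hf, hconst hu hg] at h
  simpa [wronskian, h₀, h₁, hf₀, hf₁, hg₀, hg₁] using h

namespace IsRegularSolution

lemma continuous (hu : IsRegularSolution q κ u) : Continuous u :=
  hu.isSolutionOn.differentiable.continuous

lemma continuous_deriv (hu : IsRegularSolution q κ u) : Continuous (deriv u) :=
  hu.isSolutionOn.differentiable_deriv.continuous

lemma eq (hq : Continuous q) (hu : IsRegularSolution q κ u) (hw : IsRegularSolution q κ w) :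
    u = w := by
  have hderiv : deriv (u - w) 0 = 0 := by
    simp [((hu.isSolutionOn 0 trivial).1.sub (hw.isSolutionOn 0 trivial).1).deriv,
      hu.deriv_zero, hw.deriv_zero]
  exact funext fun t ↦ sub_eq_zero.1 <|
    (hu.isSolutionOn.sub hw.isSolutionOn).eq_zero hq (by simp [hu.apply_zero, hw.apply_zero])
      hderiv t

lemma deriv_ne_zero (hq : Continuous q) (hu : IsRegularSolution q κ u) {t : ℝ} (ht : u t = 0) :
    deriv u t ≠ 0 := by
  intro h
  have hzero : u = fun _ ↦ 0 := funext fun s ↦ hu.isSolutionOn.eq_zero hq ht h s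
  simpa [hzero] using hu.deriv_zero

theorem exists_eq_const_mul (hq : Continuous q) (hu : IsRegularSolution q κ u) {φ : ℝ → ℝ}
    (hφ : IsSolutionOn q κ (Ioi 0) φ) (hcont : ContinuousOn φ (Ici 0)) (hφ₀ : φ 0 = 0) :
    ∃ c, ∀ t ≥ 0, φ t = c * u t := by
  obtain ⟨G, -, -, hG⟩ := exists_continuous_solution_family hq (.const Unit κ) 0 1 0
  obtain ⟨hw, hw₀, hw₁⟩ := hG ()
  set w := G ()
  have hconst {t : ℝ} (ht : t ∈ Ioi 0) {v : ℝ → ℝ} (hv : IsSolutionOn q κ univ v) :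
      wronskian φ v t = wronskian φ v 1 :=
    wronskian_eq_of_mem isOpen_Ioi isPreconnected_Ioi hφ (hv.mono (subset_univ _)) ht
      (mem_Ioi.2 one_pos)
  have hunit (t : ℝ) : wronskian u w t = 1 := by
    rw [wronskian_eq_of_mem isOpen_univ isPreconnected_univ hu.isSolutionOn hw trivial
      (mem_univ 0)]
    simp [wronskian, hu.apply_zero, hu.deriv_zero, hw₀]
  have hIoi : EqOn φ (fun t ↦ u t * wronskian φ w 1 - w t * wronskian φ u 1) (Ioi 0) := by
    intro t ht
    simpa [hunit, hconst ht hw, hconst ht hu.isSolutionOn] using mul_wronskian_eq φ u w t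
  have hwc := hw.differentiable.continuous
  have huc := hu.continuous
  have hIci := hIoi.of_subset_closure hcont (by fun_prop) Ioi_subset_Ici_self (by simp)
  have hzero : wronskian φ u 1 = 0 := by
    simpa [hφ₀, hu.apply_zero, hw₀] using hIci self_mem_Ici
  exact ⟨wronskian φ w 1, fun t ht ↦ by simpa [hzero, mul_comm] using hIci ht⟩

end IsRegularSolution

end Solutions

section Positivity

variable {q : ℝ → ℝ} {κ : ℝ} {s : Set ℝ} {u : ℝ → ℝ} {a : ℝ}

lemma IsSolutionOn.hasDerivAt_mul_deriv {t : ℝ} (hu : IsSolutionOn q κ s u) (ht : t ∈ s) :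
    HasDerivAt (fun t ↦ u t * deriv u t) (deriv u t ^ 2 + (κ - q t) * u t ^ 2) t := by
  obtain ⟨hu₁, hu₂⟩ := hu t ht
  convert! hu₁.mul hu₂ using 1
  ring

lemma IsSolutionOn.monotoneOn_mul_deriv (hu : IsSolutionOn q κ (Ici a) u)
    (hq : ∀ t ≥ a, q t ≤ κ) : MonotoneOn (fun t ↦ u t * deriv u t) (Ici a) :=
  monotoneOn_of_hasDerivAt_nonneg (convex_Ici a) (fun _ ht ↦ hu.hasDerivAt_mul_deriv ht)
    fun t ht ↦ by
      have : 0 ≤ κ - q t := sub_nonneg.2 (hq t (interior_subset ht))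
      positivity

lemma IsSolutionOn.pos_of_potential_le (hu : IsSolutionOn q κ univ u) (hq : ∀ t ≥ a, q t ≤ κ)
    (ha : 0 < u a) (ha' : 0 < deriv u a) {t : ℝ} (ht : a ≤ t) : 0 < u t := by
  by_contra! hut
  have hat : a < t := ht.lt_of_ne fun h ↦ (h ▸ hut).not_gt ha
  have hcont := hu.differentiable.continuous
  obtain ⟨c, hc, huc, -⟩ := exists_first_zero hcont
    ((hcont.continuousAt.eventually_const_lt ha).filter_mono nhdsWithin_le_nhds) hat hut
  have hle := (hu.mono (subset_univ _)).monotoneOn_mul_deriv hq self_mem_Ici hc.1.le hc.1.le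
  simp only [huc, zero_mul] at hle
  exact hle.not_gt (mul_pos ha ha')

namespace IsRegularSolution

lemma eventually_pos (hu : IsRegularSolution q κ u) : ∀ᶠ t in 𝓝[>] 0, 0 < u t :=
  eventually_nhdsGT_pos_of_deriv_pos (by simp [hu.deriv_zero]) hu.apply_zero

lemma pos_of_potential_le (hu : IsRegularSolution q κ u) (hq : ∀ t ≥ 0, q t ≤ κ) {t : ℝ}
    (ht : 0 < t) : 0 < u t := by
  have hderiv : ∀ᶠ t in 𝓝[>] 0, 0 < deriv u t :=
    (hu.continuous_deriv.continuousAt.eventually_const_lt (by simp [hu.deriv_zero])).filter_mono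
      nhdsWithin_le_nhds
  obtain ⟨a, ⟨hua, hua'⟩, ha⟩ := ((hu.eventually_pos.and hderiv).and (Ioo_mem_nhdsGT ht)).exists
  exact hu.isSolutionOn.pos_of_potential_le (fun t hat ↦ hq t (ha.1.le.trans hat)) hua hua' ha.2.le

lemma pos_of_nonneg (hq : Continuous q) (hu : IsRegularSolution q κ u)
    (hnonneg : ∀ t > 0, 0 ≤ u t) {t : ℝ} (ht : 0 < t) : 0 < u t := by
  refine (hnonneg t ht).lt_of_ne fun hzero ↦ hu.deriv_ne_zero hq hzero.symm ?_
  have hmin : IsLocalMin u t := by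
    filter_upwards [Ioi_mem_nhds ht] with r hr
    exact hzero ▸ hnonneg r hr
  exact hmin.deriv_eq_zero

end IsRegularSolution

section Stability

variable {K : Type*} [TopologicalSpace K] {e : K → ℝ} {U : K → ℝ → ℝ} {k₀ : K} {R : ℝ}

/- On the compact interval `[0, R]` the pair `(u, u')` stays away from the quadrant
`u ≤ 0, u' ≤ 0`, which a solution would have to enter at its first zero. -/
lemma eventually_forall_pos_Ioc (hU : Continuous (Function.uncurry U))
    (hU' : Continuous (Function.uncurry fun k ↦ deriv (U k)))
    (hreg : ∀ k, IsRegularSolution q (e k) (U k)) (hpos : ∀ t ∈ Ioc 0 R, 0 < U k₀ t) :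
    ∀ᶠ k in 𝓝 k₀, ∀ t ∈ Ioc 0 R, 0 < U k t := by
  have hquadrant : ∀ᶠ k in 𝓝 k₀, ∀ t ∈ Icc 0 R, 0 < U k t ∨ 0 < deriv (U k) t := by
    refine isCompact_Icc.eventually_forall_of_forall_eventually fun t ht ↦ ?_
    rcases ht.1.eq_or_lt with rfl | ht₀
    · have hone : 0 < deriv (U k₀) 0 := by simp [(hreg k₀).deriv_zero]
      filter_upwards [hU'.continuousAt.eventually_const_lt hone] with p hp using .inr hp
    · filter_upwards [hU.continuousAt.eventually_const_lt (hpos t ⟨ht₀, ht.2⟩)] with p hp using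
        .inl hp
  filter_upwards [hquadrant] with k hk t ht
  by_contra! hle
  obtain ⟨c, hc, hzero, hposc⟩ :=
    exists_first_zero (hreg k).continuous (hreg k).eventually_pos ht.1 hle
  rcases hk c ⟨hc.1.le, hc.2.trans ht.2⟩ with h | h
  · exact h.ne' hzero
  · exact h.not_ge (deriv_nonpos_of_pos_left hc.1 hposc hzero)

theorem eventually_forall_pos (hU : Continuous (Function.uncurry U))
    (hU' : Continuous (Function.uncurry fun k ↦ deriv (U k)))
    (hreg : ∀ k, IsRegularSolution q (e k) (U k)) (hR : 0 < R)
    (hpos : ∀ t ∈ Ioc 0 R, 0 < U k₀ t) (hderiv : 0 < deriv (U k₀) R)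
    (hq : ∀ᶠ k in 𝓝 k₀, ∀ t ≥ R, q t ≤ e k) : ∀ᶠ k in 𝓝 k₀, ∀ t > 0, 0 < U k t := by
  have hderiv' : ∀ᶠ k in 𝓝 k₀, 0 < deriv (U k) R :=
    (hU'.comp (Continuous.prodMk_left R)).continuousAt.eventually_const_lt hderiv
  filter_upwards [eventually_forall_pos_Ioc hU hU' hreg hpos, hderiv', hq] with k hk hk' hqk t ht
  rcases le_total t R with htR | hRt
  · exact hk t ⟨ht, htR⟩
  · exact (hreg k).isSolutionOn.pos_of_potential_le hqk (hk R ⟨hR, le_rfl⟩) hk' hRt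

end Stability

end Positivity

section Decay

variable {q : ℝ → ℝ} {κ μ : ℝ} {u w : ℝ → ℝ}

namespace IsSolutionOn

lemma eventually_mul_deriv_nonpos (hu : IsSolutionOn q κ univ u) (hq : ∀ᶠ t in atTop, q t ≤ κ)
    (hint : IntegrableOn (fun t ↦ u t ^ 2) (Ioi 0)) : ∀ᶠ t in atTop, u t * deriv u t ≤ 0 := by
  obtain ⟨a, ha⟩ := eventually_atTop.1 hq
  by_contra hfreq
  obtain ⟨b, hb, hab⟩ :=
    ((not_eventually.1 hfreq).and_eventually (eventually_ge_atTop a)).exists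
  rw [not_le] at hb
  have hpos (t : ℝ) (ht : t ∈ Ici b) : 0 < u t * deriv u t :=
    hb.trans_le <| (hu.mono (subset_univ _)).monotoneOn_mul_deriv
      (fun t hbt ↦ ha t (hab.trans hbt)) self_mem_Ici ht ht
  have hsq : MonotoneOn (fun t ↦ u t ^ 2) (Ici b) :=
    monotoneOn_of_hasDerivAt_nonneg (convex_Ici b) (fun t _ ↦ hasDerivAt_sq (hu t trivial).1)
      fun t ht ↦ mul_nonneg two_pos.le (hpos t (interior_subset ht)).le
  have hub : u b ^ 2 ≤ 0 :=
    nonpos_of_integrableOn_Ioi_of_le hint fun t (ht : b < t) ↦ hsq self_mem_Ici ht.le ht.le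
  have : u b = 0 := pow_eq_zero_iff two_ne_zero |>.1 (hub.antisymm (sq_nonneg _))
  simp [this] at hb

/- For large `t` one has `(u²)'' ≥ κ u²`, because `q ≤ κ / 2` there. -/
theorem exists_abs_le_mul_exp (hu : IsSolutionOn q κ univ u) (hκ : 0 < κ)
    (hq : ∀ᶠ t in atTop, q t ≤ κ / 2) (hdecr : ∀ᶠ t in atTop, u t * deriv u t ≤ 0) :
    ∃ C > 0, ∀ t ≥ 0, |u t| ≤ C * Real.exp (-(√κ * t) / 2) := by
  obtain ⟨a, ha⟩ := eventually_atTop.1 (hq.and hdecr)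
  have hsq : AntitoneOn (fun t ↦ u t ^ 2) (Ici a) :=
    antitoneOn_of_hasDerivAt_nonpos (convex_Ici a) (fun t _ ↦ hasDerivAt_sq (hu t trivial).1)
      fun t ht ↦ mul_nonpos_of_nonneg_of_nonpos two_pos.le (ha t (interior_subset ht)).2
  have hanti : AntitoneOn (fun t ↦ u t ^ 2 * Real.exp (√κ * t)) (Ici a) :=
    antitoneOn_mul_exp (Real.sqrt_pos.2 hκ) (f' := fun t ↦ 2 * (u t * deriv u t))
      (fun t _ ↦ hasDerivAt_sq (hu t trivial).1)
      (fun t _ ↦ (hu.hasDerivAt_mul_deriv trivial).const_mul 2)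
      (fun t ht ↦ hsq self_mem_Ici ht ht)
      fun t ht ↦ by
        rw [Real.sq_sqrt hκ.le]
        nlinarith [sq_nonneg (deriv u t), mul_nonneg (sub_nonneg.2 (ha t ht).1) (sq_nonneg (u t))]
  have hcont := hu.differentiable.continuous
  obtain ⟨B, hB⟩ := exists_forall_ge_le_of_eventually_le (by fun_prop)
    ((eventually_ge_atTop a).mono fun t ht ↦ hanti self_mem_Ici ht ht) 0
  have hB₀ : 0 ≤ B := le_trans (by positivity) (hB 0 le_rfl)
  refine ⟨√(B + 1), by positivity, fun t ht ↦ abs_le_of_sq_le_sq ?_ (by positivity)⟩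
  have hexp : Real.exp (-(√κ * t) / 2) ^ 2 = (Real.exp (√κ * t))⁻¹ := by
    rw [← Real.exp_nat_mul, ← Real.exp_neg]
    ring_nf
  rw [mul_pow, Real.sq_sqrt (by positivity), hexp, ← div_eq_mul_inv, le_div_iff₀ (Real.exp_pos _)]
  linarith [hB t ht]

end IsSolutionOn

/-- A regular solution which is square integrable on `(0, ∞)`: a Dirichlet eigenfunction at
energy `-κ`, normalised by `u' 0 = 1`. -/
structure IsBoundState (q : ℝ → ℝ) (κ : ℝ) (u : ℝ → ℝ) : Prop extends
    IsRegularSolution q κ u where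
  integrableOn_sq : IntegrableOn (fun t ↦ u t ^ 2) (Ioi 0)

lemma IsRegularSolution.isBoundState (hu : IsRegularSolution q κ u) (hκ : 0 < κ)
    (hq : ∀ᶠ t in atTop, q t ≤ κ / 2) (hdecr : ∀ᶠ t in atTop, u t * deriv u t ≤ 0) :
    IsBoundState q κ u := by
  refine ⟨hu, ?_⟩
  obtain ⟨C, -, hC⟩ := hu.isSolutionOn.exists_abs_le_mul_exp hκ hq hdecr
  refine ((exp_neg_integrableOn_Ioi 0 (Real.sqrt_pos.2 hκ)).const_mul (C ^ 2)).mono'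
    (hu.continuous.pow 2).aestronglyMeasurable (ae_restrict_of_forall_mem measurableSet_Ioi ?_)
  intro t ht
  calc ‖u t ^ 2‖ = |u t| ^ 2 := by simp
    _ ≤ (C * Real.exp (-(√κ * t) / 2)) ^ 2 := by gcongr; exact hC t (le_of_lt ht)
    _ = C ^ 2 * Real.exp (-√κ * t) := by
      rw [mul_pow, ← Real.exp_nat_mul]
      ring_nf

namespace IsBoundState

lemma eventually_mul_deriv_nonpos (hu : IsBoundState q κ u) (hκ : 0 < κ)
    (hq : Tendsto q atTop (𝓝 0)) : ∀ᶠ t in atTop, u t * deriv u t ≤ 0 :=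
  hu.isSolutionOn.eventually_mul_deriv_nonpos (hq.eventually_le_const hκ) hu.integrableOn_sq

theorem exists_abs_le_mul_exp (hu : IsBoundState q κ u) (hκ : 0 < κ)
    (hq : Tendsto q atTop (𝓝 0)) : ∃ C > 0, ∀ t ≥ 0, |u t| ≤ C * Real.exp (-(√κ * t) / 2) :=
  hu.isSolutionOn.exists_abs_le_mul_exp hκ (hq.eventually_le_const (half_pos hκ))
    (hu.eventually_mul_deriv_nonpos hκ hq)

lemma tendsto_zero (hu : IsBoundState q κ u) (hκ : 0 < κ) (hq : Tendsto q atTop (𝓝 0)) :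
    Tendsto u atTop (𝓝 0) := by
  obtain ⟨C, -, hC⟩ := hu.exists_abs_le_mul_exp hκ hq
  have hexp : Tendsto (fun t ↦ C * Real.exp (-(√κ * t) / 2)) atTop (𝓝 0) := by
    have harg : Tendsto (fun t ↦ √κ * t / 2) atTop atTop :=
      (tendsto_id.const_mul_atTop (Real.sqrt_pos.2 hκ)).atTop_div_const two_pos
    simpa [neg_div, Function.comp_def] using
      (Real.tendsto_exp_neg_atTop_nhds_zero.comp harg).const_mul C
  exact squeeze_zero_norm' ((eventually_ge_atTop 0).mono hC) hexp

lemma deriv_isBigO_one (hu : IsBoundState q κ u) (hκ : 0 < κ) (hq : Tendsto q atTop (𝓝 0)) :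
    deriv u =O[atTop] fun _ ↦ (1 : ℝ) := by
  obtain ⟨a, ha⟩ := eventually_atTop.1
    ((hq.eventually_le_const hκ).and (hu.eventually_mul_deriv_nonpos hκ hq))
  have hanti : AntitoneOn (fun t ↦ deriv u t ^ 2) (Ici a) :=
    antitoneOn_of_hasDerivAt_nonpos (convex_Ici a)
      (fun t _ ↦ hasDerivAt_sq (hu.isSolutionOn t trivial).2) fun t ht ↦ by
        obtain ⟨hqt, hut⟩ := ha t (interior_subset ht)
        nlinarith [mul_nonneg (sub_nonneg.2 hqt) (neg_nonneg.2 hut)]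
  refine .of_bound |deriv u a| ((eventually_ge_atTop a).mono fun t ht ↦ ?_)
  simpa using sq_le_sq.1 (hanti self_mem_Ici ht ht)

lemma tendsto_wronskian (hu : IsBoundState q κ u) (hw : IsBoundState q μ w) (hκ : 0 < κ)
    (hμ : 0 < μ) (hq : Tendsto q atTop (𝓝 0)) : Tendsto (wronskian u w) atTop (𝓝 0) := by
  have hu₀ := (isLittleO_one_iff ℝ).2 (hu.tendsto_zero hκ hq)
  have hw₀ := (isLittleO_one_iff ℝ).2 (hw.tendsto_zero hμ hq)
  refine (isLittleO_one_iff ℝ).1 ?_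
  simpa only [mul_one] using! ((hu.deriv_isBigO_one hκ hq).mul_isLittleO hw₀).sub
    (hu₀.mul_isBigO (hw.deriv_isBigO_one hμ hq))

end IsBoundState

end Decay

section GroundState

variable {q : ℝ → ℝ}

lemma eventually_forall_pos_of_frequently {K : Type*} [TopologicalSpace K] {e : K → ℝ}
    {U : K → ℝ → ℝ} {k₀ : K} (hU : Continuous (Function.uncurry U))
    (hU' : Continuous (Function.uncurry fun k ↦ deriv (U k)))
    (hreg : ∀ k, IsRegularSolution q (e k) (U k)) (he : ContinuousAt e k₀) (hk₀ : 0 < e k₀)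
    (hq : Tendsto q atTop (𝓝 0)) (hpos : ∀ t > 0, 0 < U k₀ t)
    (hfreq : ∃ᶠ t in atTop, 0 < U k₀ t * deriv (U k₀) t) :
    ∀ᶠ k in 𝓝 k₀, ∀ t > 0, 0 < U k t := by
  obtain ⟨a, ha⟩ := eventually_atTop.1 (hq.eventually_le_const (half_pos hk₀))
  obtain ⟨R, hmul, haR, hR⟩ :=
    (hfreq.and_eventually ((eventually_ge_atTop a).and (eventually_gt_atTop 0))).exists
  refine eventually_forall_pos hU hU' hreg hR (fun t ht ↦ hpos t ht.1)
    (pos_of_mul_pos_right hmul (hpos R hR).le) ?_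
  filter_upwards [he.eventually_const_lt (half_lt_self hk₀)] with k hk t ht
  exact (ha t (haR.trans ht)).trans hk.le

/- If no energy carried a positive bound state, the set of energies in `[0, |B|]` whose regular
solution is nonnegative would be open and closed; it contains `|B| ≥ sup q` but not `0`. -/
theorem exists_pos_isBoundState (hq : Continuous q) (hq₀ : Tendsto q atTop (𝓝 0)) {z : ℝ → ℝ}
    (hz : IsRegularSolution q 0 z) {b : ℝ} (hb : 0 < b) (hzb : z b < 0) :
    ∃ κ > 0, ∃ u, IsBoundState q κ u ∧ ∀ t > 0, 0 < u t := by
  obtain ⟨B, hB⟩ := exists_forall_ge_le_of_eventually_le hq (hq₀.eventually_le_const one_pos) 0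
  let e : C(Icc 0 |B|, ℝ) := ⟨Subtype.val, continuous_subtype_val⟩
  obtain ⟨U, hU, hU', hsol⟩ := exists_continuous_solution_family hq e 0 0 1
  have hreg (k) : IsRegularSolution q (e k) (U k) := ⟨(hsol k).1, (hsol k).2.1, (hsol k).2.2⟩
  by_contra! hno
  let S : Set (Icc 0 |B|) := {k | ∀ t > 0, 0 ≤ U k t}
  have hzero (k) (hk : k ∈ S) : 0 < e k := by
    refine k.2.1.lt_of_ne fun h ↦ (hk b hb).not_gt ?_
    rwa [(hreg k).eq hq (h ▸ hz)]
  have hclosed : IsClosed S := by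
    simp only [S, ofPred_forall]
    exact isClosed_iInter fun t ↦ isClosed_iInter fun _ ↦
      isClosed_le continuous_const (hU.comp (.prodMk_left t))
  have hopen : IsOpen S := isOpen_iff_eventually.2 fun k hk ↦ by
    have hpos (t) (ht : t > 0) : 0 < U k t := (hreg k).pos_of_nonneg hq hk ht
    have hfreq : ∃ᶠ t in atTop, 0 < U k t * deriv (U k) t := by
      by_contra hdecr
      obtain ⟨t, ht, hle⟩ := hno (e k) (hzero k hk) (U k) <| (hreg k).isBoundState (hzero k hk)
        (hq₀.eventually_le_const (half_pos (hzero k hk))) (by simpa using hdecr)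
      exact hle.not_gt (hpos t ht)
    filter_upwards [eventually_forall_pos_of_frequently hU hU' hreg e.continuous.continuousAt
      (hzero k hk) hq₀ hpos hfreq] with k' hk' t ht using (hk' t ht).le
  have htop : ⟨|B|, abs_nonneg B, le_rfl⟩ ∈ S := fun t ht ↦
    ((hreg _).pos_of_potential_le (fun t ht ↦ (hB t ht).trans (le_abs_self B)) ht).le
  have : PreconnectedSpace (Icc 0 |B|) := Subtype.preconnectedSpace isPreconnected_Icc
  have huniv : S = univ := IsClopen.eq_univ ⟨hclosed, hopen⟩ ⟨_, htop⟩
  exact (hzero ⟨0, le_rfl, abs_nonneg B⟩ (huniv ▸ mem_univ _)).false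

end GroundState

section Comparison

variable {q : ℝ → ℝ} {κ μ : ℝ} {s : Set ℝ} {u w z : ℝ → ℝ} {a b : ℝ}

lemma IsRegularSolution.wronskian_zero (hu : IsRegularSolution q κ u)
    (hw : IsRegularSolution q μ w) : wronskian u w 0 = 0 := by
  simp [wronskian, hu.apply_zero, hw.apply_zero]

theorem IsRegularSolution.exists_nonpos_of_lt (hu : IsRegularSolution q κ u)
    (hz : IsRegularSolution q μ z) (hμκ : μ < κ) (ha : 0 < a) (hpos : ∀ t ∈ Ioo 0 a, 0 < u t)
    (hua : u a = 0) : ∃ t ∈ Ioo 0 a, z t ≤ 0 := by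
  by_contra! hzpos
  have hstrict : StrictMonoOn (wronskian u z) (Icc 0 a) :=
    strictMonoOn_of_hasDerivAt_pos (convex_Icc 0 a)
      (fun t _ ↦ hasDerivAt_wronskian hu.isSolutionOn hz.isSolutionOn trivial) fun t ht ↦ by
        rw [interior_Icc] at ht
        exact mul_pos (sub_pos.2 hμκ) (mul_pos (hpos t ht) (hzpos t ht))
  have hlt := hstrict ⟨le_rfl, ha.le⟩ ⟨ha.le, le_rfl⟩ ha
  have hza : 0 ≤ z a := by
    have : closure (Ioo 0 a) ⊆ {t | 0 ≤ z t} := closure_minimal (fun t ht ↦ (hzpos t ht).le)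
      (isClosed_le continuous_const hz.continuous)
    rw [closure_Ioo ha.ne] at this
    exact this ⟨ha.le, le_rfl⟩
  have hle : deriv u a * z a ≤ 0 :=
    mul_nonpos_of_nonpos_of_nonneg (deriv_nonpos_of_pos_left ha hpos hua) hza
  rw [hu.wronskian_zero hz, wronskian, hua, zero_mul, sub_zero] at hlt
  exact hlt.not_ge hle

/-- The quantity `u u' - u² w' / w` differentiated in Picone's identity. It is meaningful where
`w` does not vanish. -/
def picone (u w : ℝ → ℝ) (t : ℝ) : ℝ := u t * deriv u t - u t ^ 2 * (deriv w t / w t)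

lemma hasDerivAt_picone {t : ℝ} (hu : IsSolutionOn q κ s u) (hw : IsSolutionOn q μ s w)
    (ht : t ∈ s) (hwt : w t ≠ 0) :
    HasDerivAt (picone u w)
      ((κ - μ) * u t ^ 2 + (deriv u t - u t * (deriv w t / w t)) ^ 2) t := by
  obtain ⟨hw₁, hw₂⟩ := hw t ht
  convert! (hu.hasDerivAt_mul_deriv ht).sub ((hasDerivAt_sq (hu t ht).1).mul (hw₂.div hw₁ hwt))
    using 1
  rw [Pi.div_apply]
  field_simp
  ring

theorem eqOn_zero_of_picone_le (hu : IsSolutionOn q κ univ u) (hw : IsSolutionOn q μ univ w)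
    (hμκ : μ < κ) (hua : u a = 0) (hwne : ∀ t ∈ Ici a, w t ≠ 0) (hu₀ : Tendsto u atTop (𝓝 0))
    {C : ℝ} (hle : ∀ᶠ t in atTop, picone u w t ≤ C * u t ^ 2) : EqOn u 0 (Ioi a) := by
  have hsub : 0 < κ - μ := sub_pos.2 hμκ
  have hmono : MonotoneOn (picone u w) (Ici a) :=
    monotoneOn_of_hasDerivAt_nonneg (convex_Ici a)
      (fun t ht ↦ hasDerivAt_picone hu hw trivial (hwne t ht)) fun t _ ↦ by positivity
  have hlim : Tendsto (fun t ↦ C * u t ^ 2) atTop (𝓝 0) := by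
    simpa using (hu₀.pow 2).const_mul C
  have hzero (t : ℝ) (ht : t ∈ Ioi a) : picone u w t = 0 := by
    have hta : t ∈ Ici a := Ioi_subset_Ici_self ht
    refine le_antisymm (ge_of_tendsto hlim ?_) ?_
    · filter_upwards [hle, eventually_ge_atTop t] with r hr htr
      exact (hmono hta (le_trans hta htr) htr).trans hr
    · simpa [picone, hua] using hmono self_mem_Ici hta hta
  intro t ht
  have hconst : picone u w =ᶠ[𝓝 t] fun _ ↦ 0 := by
    filter_upwards [Ioi_mem_nhds ht] with r hr using hzero r hr
  have hsum := (hasDerivAt_picone hu hw trivial (hwne t (Ioi_subset_Ici_self ht))).unique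
    ((hasDerivAt_const t (0 : ℝ)).congr_of_eventuallyEq hconst)
  have hsq := ((add_eq_zero_iff_of_nonneg (by positivity) (sq_nonneg _)).1 hsum).1
  simpa [hsub.ne'] using hsq

lemma IsSolutionOn.exists_eventually_deriv_add_mul_nonpos (hz : IsSolutionOn q μ univ z)
    (hq : Tendsto q atTop (𝓝 0)) (hneg : ∀ᶠ t in atTop, z t < 0) :
    ∃ ω, ∀ᶠ t in atTop, deriv z t + ω * z t ≤ 0 := by
  obtain ⟨a, ha⟩ := eventually_atTop.1 (hneg.and (hq.eventually_const_le neg_one_lt_zero))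
  refine ⟨√(|μ| + 1), (eventually_ge_atTop a).mono fun t ht ↦ ?_⟩
  refine deriv_add_mul_nonpos (by positivity) (fun t _ ↦ (hz t trivial).1)
    (fun t _ ↦ (hz t trivial).2) (fun t ht ↦ (ha t ht).1.le) (fun t ht ↦ ?_) (mem_Ici.2 ht)
  rw [Real.sq_sqrt (by positivity)]
  exact mul_le_mul_of_nonpos_right (by linarith [(ha t ht).2, le_abs_self μ]) (ha t ht).1.le

namespace IsBoundState

lemma exists_eventually_picone_le (hu : IsBoundState q κ u) (hκ : 0 < κ)
    (hq : Tendsto q atTop (𝓝 0)) (hz : IsSolutionOn q μ univ z) (hneg : ∀ᶠ t in atTop, z t < 0) :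
    ∃ C, ∀ᶠ t in atTop, picone u z t ≤ C * u t ^ 2 := by
  obtain ⟨ω, hω⟩ := hz.exists_eventually_deriv_add_mul_nonpos hq hneg
  refine ⟨ω, ?_⟩
  filter_upwards [hω, hneg, hu.eventually_mul_deriv_nonpos hκ hq] with t ht hzt hut
  have hratio : -ω ≤ deriv z t / z t := by
    rw [le_div_iff_of_neg hzt]
    linarith
  rw [picone]
  linarith [mul_le_mul_of_nonneg_left hratio (sq_nonneg (u t))]

/- Sturm comparison with `z` places the first zero of `u` beyond the node `b`, where `z` no longer
vanishes and Picone's identity applies up to infinity. -/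
theorem pos_of_lt (hu : IsBoundState q κ u) (hκ : 0 < κ) (hq : Continuous q)
    (hq₀ : Tendsto q atTop (𝓝 0)) (hz : IsRegularSolution q μ z) (hμκ : μ < κ)
    (hzpos : ∀ t ∈ Ioo 0 b, 0 < z t) (hzneg : ∀ t ∈ Ioi b, z t < 0) {t : ℝ} (ht : 0 < t) :
    0 < u t := by
  by_contra! hut
  obtain ⟨a, ha, hua, hpos⟩ := exists_first_zero hu.continuous hu.eventually_pos ht hut
  obtain ⟨r, hr, hzr⟩ := hu.exists_nonpos_of_lt hz hμκ ha.1 hpos hua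
  have hba : b < a := lt_of_not_ge fun h ↦ (hzpos r ⟨hr.1, hr.2.trans_le h⟩).not_ge hzr
  obtain ⟨C, hC⟩ := hu.exists_eventually_picone_le hκ hq₀ hz.isSolutionOn
    ((eventually_gt_atTop b).mono hzneg)
  have hvanish : EqOn u 0 (Ioi a) := eqOn_zero_of_picone_le hu.isSolutionOn hz.isSolutionOn hμκ
    hua (fun t hat ↦ (hzneg t (hba.trans_le hat)).ne) (hu.tendsto_zero hκ hq₀) hC
  have ha1 : a + 1 ∈ Ioi a := lt_add_one a
  refine hu.deriv_ne_zero hq (hvanish ha1) ?_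
  rw [(hvanish.eventuallyEq_of_mem (Ioi_mem_nhds ha1)).deriv_eq]
  exact deriv_const _ _

lemma energy_le_of_pos (hu : IsBoundState q κ u) (hw : IsBoundState q μ w) (hκ : 0 < κ)
    (hμ : 0 < μ) (hq : Tendsto q atTop (𝓝 0)) (hupos : ∀ t > 0, 0 < u t)
    (hwpos : ∀ t > 0, 0 < w t) : κ ≤ μ := by
  by_contra! hlt
  have hstrict : StrictMonoOn (wronskian u w) (Ici 0) :=
    strictMonoOn_of_hasDerivAt_pos (convex_Ici 0)
      (fun t _ ↦ hasDerivAt_wronskian hu.isSolutionOn hw.isSolutionOn trivial) fun t ht ↦ by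
        rw [interior_Ici] at ht
        exact mul_pos (sub_pos.2 hlt) (mul_pos (hupos t ht) (hwpos t ht))
  have hone : 0 < wronskian u w 1 := by
    simpa only [hu.wronskian_zero hw.toIsRegularSolution] using
      hstrict self_mem_Ici (mem_Ici.2 zero_le_one) one_pos
  refine hone.not_ge (ge_of_tendsto (hu.tendsto_wronskian hw hκ hμ hq) ?_)
  filter_upwards [eventually_ge_atTop 1] with t ht
  exact hstrict.monotoneOn (mem_Ici.2 zero_le_one) (mem_Ici.2 (zero_le_one.trans ht)) ht

theorem energy_eq_of_pos (hu : IsBoundState q κ u) (hw : IsBoundState q μ w) (hκ : 0 < κ)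
    (hμ : 0 < μ) (hq : Tendsto q atTop (𝓝 0)) (hupos : ∀ t > 0, 0 < u t)
    (hwpos : ∀ t > 0, 0 < w t) : κ = μ :=
  (hu.energy_le_of_pos hw hκ hμ hq hupos hwpos).antisymm
    (hw.energy_le_of_pos hu hμ hκ hq hwpos hupos)

end IsBoundState

end Comparison

section Eigenfunctions

variable {q z : ℝ → ℝ} {κ b : ℝ} {u φ : ℝ → ℝ}

/-- `IsDirichletEigenfunction` for the operator `-f'' - q f` with an arbitrary potential `q`. -/
def IsDirichletEigenfunctionOf (q : ℝ → ℝ) (ξ : ℝ) (φ : ℝ → ℝ) : Prop :=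
  φ 0 = 0 ∧ ContinuousOn φ (Ici 0) ∧
  (∀ R ∈ Ioi (0 : ℝ), HasDerivAt φ (deriv φ R) R) ∧
  (∀ R ∈ Ioi (0 : ℝ), HasDerivAt (deriv φ) (deriv (deriv φ) R) R) ∧
  (∀ R ∈ Ioi (0 : ℝ), -deriv (deriv φ) R - q R * φ R = ξ * φ R) ∧
  IntegrableOn (fun R ↦ φ R ^ 2) (Ioi 0)

lemma IsDirichletEigenfunctionOf.isSolutionOn (hφ : IsDirichletEigenfunctionOf q (-κ) φ) :
    IsSolutionOn q κ (Ioi 0) φ := by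
  obtain ⟨-, -, hφ₁, hφ₂, heq, -⟩ := hφ
  refine fun t ht ↦ ⟨hφ₁ t ht, ?_⟩
  convert! hφ₂ t ht using 1
  linarith [heq t ht]

lemma IsBoundState.isDirichletEigenfunctionOf (hu : IsBoundState q κ u) :
    IsDirichletEigenfunctionOf q (-κ) u := by
  have hderiv₂ (t : ℝ) : deriv (deriv u) t = (κ - q t) * u t := (hu.isSolutionOn t trivial).2.deriv
  refine ⟨hu.apply_zero, hu.continuous.continuousOn, fun t _ ↦ (hu.isSolutionOn t trivial).1,
    fun t _ ↦ ?_, fun t _ ↦ ?_, hu.integrableOn_sq⟩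
  · exact hderiv₂ t ▸ (hu.isSolutionOn t trivial).2
  · rw [hderiv₂]
    ring

lemma IsDirichletEigenfunctionOf.exists_eq_const_mul (hq : Continuous q)
    (hφ : IsDirichletEigenfunctionOf q (-κ) φ) (hu : IsRegularSolution q κ u) :
    ∃ c, ∀ t ≥ 0, φ t = c * u t :=
  hu.exists_eq_const_mul hq hφ.isSolutionOn hφ.2.1 hφ.1

lemma IsDirichletEigenfunctionOf.exists_isBoundState (hq : Continuous q)
    (hφ : IsDirichletEigenfunctionOf q (-κ) φ) {t : ℝ} (ht : 0 ≤ t) (hφt : φ t ≠ 0) :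
    ∃ u, IsBoundState q κ u := by
  obtain ⟨u, hu⟩ := exists_isRegularSolution hq κ
  obtain ⟨c, hc⟩ := hφ.exists_eq_const_mul hq hu
  have hc₀ : c ≠ 0 := left_ne_zero_of_mul (hc t ht ▸ hφt)
  have hint : IntegrableOn (fun r ↦ c⁻¹ ^ 2 * φ r ^ 2) (Ioi 0) :=
    hφ.2.2.2.2.2.const_mul (c⁻¹ ^ 2)
  refine ⟨u, hu, hint.congr_fun (fun r hr ↦ ?_) measurableSet_Ioi⟩
  simp only [hc r (le_of_lt hr)]
  field_simp

theorem unique_simple_negative_eigenvalue_general (hq : ContDiff ℝ (⊤ : ℕ∞) q)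
    (hq₀ : Tendsto q atTop (𝓝 0)) (hz : IsRegularSolution q 0 z)
    (hzpos : ∀ R ∈ Ioo 0 b, 0 < z R) (hzneg : ∀ R ∈ Ioi b, z R < 0) :
    ∃ (ξd : ℝ) (φd : ℝ → ℝ) (C : ℝ), ξd < 0 ∧ 0 < C ∧
      ContDiffOn ℝ (⊤ : ℕ∞) φd (Ici 0) ∧
      IsDirichletEigenfunctionOf q ξd φd ∧
      (∀ R > (0 : ℝ), 0 < φd R) ∧
      (∀ R ≥ (0 : ℝ), |φd R| ≤ C * Real.exp (-(√|ξd| * R) / 2)) ∧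
      (∀ φ : ℝ → ℝ, IsDirichletEigenfunctionOf q ξd φ → ∃ c : ℝ, ∀ R ≥ (0 : ℝ), φ R = c * φd R) ∧
      (∀ ξ : ℝ, ξ < 0 → ξ ≠ ξd → ∀ φ : ℝ → ℝ, IsDirichletEigenfunctionOf q ξ φ →
        ∀ R ≥ (0 : ℝ), φ R = 0) := by
  have hqc := hq.continuous
  obtain ⟨r, hbr, hr⟩ := ((eventually_gt_atTop b).and (eventually_gt_atTop 0)).exists
  obtain ⟨κ, hκ, u, hu, hupos⟩ := exists_pos_isBoundState hqc hq₀ hz hr (hzneg r hbr)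
  obtain ⟨C, hC, hdecay⟩ := hu.exists_abs_le_mul_exp hκ hq₀
  refine ⟨-κ, u, C, neg_lt_zero.2 hκ, hC, (hu.isSolutionOn.contDiff hq).contDiffOn,
    hu.isDirichletEigenfunctionOf, hupos, ?_, fun φ hφ ↦ hφ.exists_eq_const_mul hqc hu.1, ?_⟩
  · simpa only [abs_neg, abs_of_pos hκ] using hdecay
  · intro ξ hξ hne φ hφ R hR
    by_contra hφR
    rw [← neg_neg ξ] at hφ
    obtain ⟨w, hw⟩ := hφ.exists_isBoundState hqc hR hφR
    have hwpos (t : ℝ) (ht : t > 0) : 0 < w t :=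
      hw.pos_of_lt (neg_pos.2 hξ) hqc hq₀ hz (neg_pos.2 hξ) hzpos hzneg ht
    refine hne ?_
    rw [hu.energy_eq_of_pos hw hκ (neg_pos.2 hξ) hq₀ hupos hwpos, neg_neg]

end Eigenfunctions

section ZeroEnergy

/-- The potential `5 W⁴` of `𝓛`, where `W(R) = (1 + R² / 3)^(-1/2)` is the ground state. -/
def potential (R : ℝ) : ℝ := 5 / (1 + R ^ 2 / 3) ^ 2

/-- The zero-energy solution of `𝓛` generated by the scaling symmetry: `R (W + 2 R W')`, where
`W(R) = (1 + R² / 3)^(-1/2)` is the ground state. -/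
def zeroEnergy (R : ℝ) : ℝ := R * (1 - R ^ 2 / 3) / √(1 + R ^ 2 / 3) ^ 3

lemma one_add_sq_div_three_pos (R : ℝ) : 0 < 1 + R ^ 2 / 3 := by positivity

lemma contDiff_potential : ContDiff ℝ (⊤ : ℕ∞) potential :=
  contDiff_const.div (by fun_prop) fun R ↦ (pow_pos (one_add_sq_div_three_pos R) 2).ne'

lemma tendsto_potential : Tendsto potential atTop (𝓝 0) := by
  have hden : Tendsto (fun R : ℝ ↦ 1 + R ^ 2 / 3) atTop atTop :=
    tendsto_atTop_add_const_left _ _ ((tendsto_pow_atTop two_ne_zero).atTop_div_const three_pos)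
  exact ((tendsto_pow_atTop two_ne_zero).comp hden).const_div_atTop 5

lemma hasDerivAt_div_sqrt_pow {p : ℝ → ℝ} {p' R : ℝ} (hp : HasDerivAt p p' R) (n : ℕ) :
    HasDerivAt (fun R ↦ p R / √(1 + R ^ 2 / 3) ^ n)
      ((p' * (1 + R ^ 2 / 3) - n * p R * R / 3) / √(1 + R ^ 2 / 3) ^ (n + 2)) R := by
  have hpos := one_add_sq_div_three_pos R
  have hs := Real.sqrt_pos.2 hpos
  have hsqrt : HasDerivAt (fun R ↦ √(1 + R ^ 2 / 3)) (R / (3 * √(1 + R ^ 2 / 3))) R := by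
    convert! (((hasDerivAt_pow 2 R).div_const 3).const_add 1).sqrt hpos.ne' using 1
    field_simp
    norm_num [mul_comm]
  refine (hp.fun_div (hsqrt.fun_pow n) (pow_pos hs n).ne').congr_deriv ?_
  rw [← Real.sq_sqrt hpos.le, Real.sqrt_sq hs.le]
  generalize √(1 + R ^ 2 / 3) = s at hs ⊢
  rcases n with _ | n
  · simp [hs.ne']
  · rw [Nat.add_sub_cancel]
    field_simp
    ring

lemma hasDerivAt_zeroEnergy (R : ℝ) :
    HasDerivAt zeroEnergy ((1 - 5 * R ^ 2 / 3) / √(1 + R ^ 2 / 3) ^ 5) R := by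
  convert! hasDerivAt_div_sqrt_pow
    ((hasDerivAt_id R).mul (((hasDerivAt_pow 2 R).div_const 3).const_sub 1)) 3 using 2
  simp only [one_mul, id_eq, Nat.cast_ofNat, Nat.add_one_sub_one, pow_one, mul_neg, Pi.mul_apply]
  ring

lemma hasDerivAt_deriv_zeroEnergy (R : ℝ) :
    HasDerivAt (fun R ↦ (1 - 5 * R ^ 2 / 3) / √(1 + R ^ 2 / 3) ^ 5)
      ((0 - potential R) * zeroEnergy R) R := by
  have hpow : (1 + R ^ 2 / 3) ^ 2 * √(1 + R ^ 2 / 3) ^ 3 = √(1 + R ^ 2 / 3) ^ (5 + 2) := by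
    rw [pow_add _ 4 3, pow_mul _ 2 2, Real.sq_sqrt (one_add_sq_div_three_pos R).le]
  convert! hasDerivAt_div_sqrt_pow
    ((((hasDerivAt_pow 2 R).const_mul 5).div_const 3).const_sub 1) 5 using 1
  rw [potential, zeroEnergy, zero_sub, ← neg_div, div_mul_div_comm, hpow]
  simp only [neg_mul, Nat.reduceAdd, Nat.cast_ofNat, Nat.add_one_sub_one, pow_one]
  ring

lemma isRegularSolution_zeroEnergy : IsRegularSolution potential 0 zeroEnergy where
  isSolutionOn := .of_hasDerivAt hasDerivAt_zeroEnergy hasDerivAt_deriv_zeroEnergy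
  apply_zero := by simp [zeroEnergy]
  deriv_zero := by simp [(hasDerivAt_zeroEnergy 0).deriv]

lemma zeroEnergy_pos {R : ℝ} (hR : R ∈ Ioo 0 √3) : 0 < zeroEnergy R := by
  have hsq : R ^ 2 < 3 := (Real.lt_sqrt hR.1.le).1 hR.2
  have hs := Real.sqrt_pos.2 (one_add_sq_div_three_pos R)
  exact div_pos (mul_pos hR.1 (by linarith)) (pow_pos hs 3)

lemma zeroEnergy_neg {R : ℝ} (hR : R ∈ Ioi √3) : zeroEnergy R < 0 := by
  have hR₀ : 0 < R := (Real.sqrt_nonneg 3).trans_lt hR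
  have hsq : 3 < R ^ 2 := (Real.sqrt_lt' hR₀).1 hR
  have hs := Real.sqrt_pos.2 (one_add_sq_div_three_pos R)
  exact div_neg_of_neg_of_pos (mul_neg_of_pos_of_neg hR₀ (by linarith)) (pow_pos hs 3)

end ZeroEnergy

/-- `𝓛` has exactly one negative eigenvalue `ξ_d`, which is simple, with a smooth, strictly
positive, exponentially decaying eigenfunction `φ_d`; for every other `ξ < 0` the only
Dirichlet `L²` solution is trivial. -/
theorem unique_simple_negative_eigenvalue :
    ∃ (ξd : ℝ) (φd : ℝ → ℝ) (C : ℝ), ξd < 0 ∧ 0 < C ∧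
      -- φd is a smooth nonzero eigenfunction, positive on (0,∞)
      ContDiffOn ℝ (⊤ : ℕ∞) φd (Set.Ici 0) ∧
      IsDirichletEigenfunction ξd φd ∧
      (∀ R > (0 : ℝ), 0 < φd R) ∧
      -- exponential decay
      (∀ R ≥ (0 : ℝ), |φd R| ≤ C * Real.exp (-(Real.sqrt |ξd| * R) / 2)) ∧
      -- the eigenvalue ξd is simple
      (∀ φ : ℝ → ℝ, IsDirichletEigenfunction ξd φ →
        ∃ c : ℝ, ∀ R ≥ (0 : ℝ), φ R = c * φd R) ∧
      -- no other negative eigenvalue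
      (∀ ξ : ℝ, ξ < 0 → ξ ≠ ξd → ∀ φ : ℝ → ℝ, IsDirichletEigenfunction ξ φ →
        ∀ R ≥ (0 : ℝ), φ R = 0) :=
  unique_simple_negative_eigenvalue_general contDiff_potential tendsto_potential
    isRegularSolution_zeroEnergy (fun _ ↦ zeroEnergy_pos) (fun _ ↦ zeroEnergy_neg)

end NegativeEigenvalue
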